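/- arXiv:1704.05901 — 2 statements merged into one kernel-verified Lean document; each statement's English description precedes it below -/
import Mathlib

section
/- Let λ > 0 and ρ ≥ 3/2 be real numbers and m a natural number. Then for every real x ≥ 0 the normalization series of the photon-added Pöschl–Teller coherent states (first choice of Z_j) converges: the series ∑_{n=0}^{∞} [ Γ(n+m+1) Γ(n+2m+2ρ)² / ( Γ(n+1)² Γ(2n+2m+2ρ) Γ(n+m+2ρ) ) ] · (x/λ²)^{n} · λ^{2m} has infinite radius of convergence, so these coherent states are defined on the whole complex plane. -/
/-!
Since `Γ(s + 1) = s Γ(s)`, consecutive coefficients of the normalization series differ by a factor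
rational in `n`, with numerator of degree `3` and denominator of degree `5`. This factor tends to
`0`, so the ratio test applies at every point of the complex plane.
-/

open Filter Topology

theorem summable_mul_pow_of_succ_eq_mul_of_tendsto_zero {𝕜 : Type*} [NormedField 𝕜]
    [CompleteSpace 𝕜] {c q : ℕ → 𝕜} (hc : ∀ᶠ n in atTop, c (n + 1) = q n * c n)
    (hq : Tendsto q atTop (𝓝 0)) (z : 𝕜) :
    Summable fun n ↦ c n * z ^ n := by
  have hqz : Tendsto (fun n ↦ ‖q n * z‖) atTop (𝓝 0) := by
    simpa using (hq.mul_const z).norm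
  refine summable_of_ratio_norm_eventually_le (r := 1 / 2) (by norm_num) ?_
  filter_upwards [hc, hqz.eventually_le_const (by norm_num : (0 : ℝ) < 1 / 2)] with n hcn hn
  calc ‖c (n + 1) * z ^ (n + 1)‖ = ‖q n * z‖ * ‖c n * z ^ n‖ := by
        rw [hcn, ← norm_mul]; ring_nf
    _ ≤ 1 / 2 * ‖c n * z ^ n‖ := by gcongr

/-- The coefficient `1 / |K_n^m|²` at `λ = 1` of the normalization series of the photon-added
Pöschl–Teller coherent states, continued to complex `ρ`; a general `λ` multiplies it by
`λ ^ (2 * m) / λ ^ (2 * n)`. The Gamma quotient is meant for `m + 2 * ρ` outside the non-positive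
integers: `Complex.Gamma` takes the junk value `0` at its poles. -/
noncomputable def pacsCoeff (ρ : ℂ) (m n : ℕ) : ℂ :=
  Complex.Gamma (n + m + 1) * Complex.Gamma (n + 2 * m + 2 * ρ) ^ 2
    / (Complex.Gamma (n + 1) ^ 2 * Complex.Gamma (2 * n + 2 * m + 2 * ρ)
      * Complex.Gamma (n + m + 2 * ρ))

/-- The ratio `pacsCoeff ρ m (n + 1) / pacsCoeff ρ m n` of consecutive coefficients, split into
quotients of affine functions of `n` so that the limit can be taken factor by factor. -/
noncomputable def pacsRatio (ρ : ℂ) (m n : ℕ) : ℂ :=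
  (n + m + 1) / (n + 1)
    * ((n + 2 * m + 2 * ρ) / (2 * n + 2 * m + 2 * ρ))
    * ((n + 2 * m + 2 * ρ) / (2 * n + 2 * m + 2 * ρ + 1))
    * (1 / (n + 1)) * (1 / (n + m + 2 * ρ))

theorem pacsCoeff_succ {ρ : ℂ} {m : ℕ} (hρ : ∀ k : ℕ, m + 2 * ρ ≠ -k) (n : ℕ) :
    pacsCoeff ρ m (n + 1) = pacsRatio ρ m n * pacsCoeff ρ m n := by
  have hne {s : ℂ} (j : ℕ) (hs : s = j + (m + 2 * ρ)) : s ≠ 0 := fun h ↦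
    hρ j (eq_neg_of_add_eq_zero_right (hs ▸ h))
  have hnm : Complex.Gamma ((n + 1 : ℕ) + m + 1) = (n + m + 1) * Complex.Gamma (n + m + 1) := by
    rw [← Complex.Gamma_add_one _ (by exact_mod_cast (n + m).succ_ne_zero)]
    push_cast; ring_nf
  have hn2m : Complex.Gamma ((n + 1 : ℕ) + 2 * m + 2 * ρ)
      = (n + 2 * m + 2 * ρ) * Complex.Gamma (n + 2 * m + 2 * ρ) := by
    rw [← Complex.Gamma_add_one _ (hne (n + m) (by push_cast; ring))]
    push_cast; ring_nf
  have hn1 : Complex.Gamma ((n + 1 : ℕ) + 1) = (n + 1) * Complex.Gamma (n + 1) := by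
    rw [← Complex.Gamma_add_one _ n.cast_add_one_ne_zero, Nat.cast_succ]
  have h2n : Complex.Gamma (2 * (n + 1 : ℕ) + 2 * m + 2 * ρ)
      = (2 * n + 2 * m + 2 * ρ + 1)
        * ((2 * n + 2 * m + 2 * ρ) * Complex.Gamma (2 * n + 2 * m + 2 * ρ)) := by
    rw [← Complex.Gamma_add_one _ (hne (2 * n + m) (by push_cast; ring)),
      ← Complex.Gamma_add_one _ (hne (2 * n + m + 1) (by push_cast; ring))]
    push_cast; ring_nf
  have hnmr : Complex.Gamma ((n + 1 : ℕ) + m + 2 * ρ)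
      = (n + m + 2 * ρ) * Complex.Gamma (n + m + 2 * ρ) := by
    rw [← Complex.Gamma_add_one _ (hne n (by ring))]
    push_cast; ring_nf
  rw [pacsCoeff, pacsCoeff, pacsRatio, hnm, hn2m, hn1, h2n, hnmr]
  simp only [div_mul_div_comm]
  congr 1 <;> ring

theorem tendsto_pacsRatio (ρ : ℂ) (m : ℕ) : Tendsto (pacsRatio ρ m) atTop (𝓝 0) := by
  have affine (a b c : ℂ) {d : ℂ} (hd : d ≠ 0) :
      Tendsto (fun n : ℕ ↦ (a + c * n) / (b + d * n)) atTop (𝓝 (c / d)) :=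
    tendsto_add_mul_div_add_mul_atTop_nhds a b c hd
  have h := ((((affine (m + 1) 1 1 one_ne_zero).mul
    (affine (2 * m + 2 * ρ) (2 * m + 2 * ρ) 1 two_ne_zero)).mul
    (affine (2 * m + 2 * ρ) (2 * m + 2 * ρ + 1) 1 two_ne_zero)).mul
    (affine 1 1 0 one_ne_zero)).mul (affine 1 (m + 2 * ρ) 0 one_ne_zero)
  convert h using 2
  · rw [pacsRatio]; ring_nf
  · simp

theorem poschlTeller_PACS_normalization_series_summable_general {ρ : ℂ} {m : ℕ}
    (hρ : ∀ k : ℕ, m + 2 * ρ ≠ -k) (z : ℂ) :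
    Summable fun n ↦ pacsCoeff ρ m n * z ^ n :=
  summable_mul_pow_of_succ_eq_mul_of_tendsto_zero
    (.of_forall (pacsCoeff_succ hρ)) (tendsto_pacsRatio ρ m) z

/-- The normalization series of the photon-added Pöschl–Teller coherent
states (first choice of `Z_j`), `∑_n x^n/|K_n^m|²`, converges for every `x ≥ 0`
(infinite radius of convergence), so these states are defined on the whole complex plane. -/
theorem poschlTeller_PACS_normalization_series_summable
    (lam ρ : ℝ) (hlam : 0 < lam) (hρ : 3 / 2 ≤ ρ) (m : ℕ) :
    ∀ x : ℝ, 0 ≤ x →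
      Summable (fun n : ℕ =>
        (Real.Gamma ((n : ℝ) + (m : ℝ) + 1)
            * Real.Gamma ((n : ℝ) + 2 * (m : ℝ) + 2 * ρ) ^ 2
          / (Real.Gamma ((n : ℝ) + 1) ^ 2
              * Real.Gamma (2 * (n : ℝ) + 2 * (m : ℝ) + 2 * ρ)
              * Real.Gamma ((n : ℝ) + (m : ℝ) + 2 * ρ)))
          * (x / lam ^ 2) ^ n * lam ^ (2 * m)) := by
  intro x _
  have hpole (k : ℕ) : (m + 2 * ρ : ℂ) ≠ -k := by
    have : (m + 2 * ρ : ℝ) ≠ -k :=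
      ne_of_gt (by linarith [m.cast_nonneg (α := ℝ), k.cast_nonneg (α := ℝ)])
    exact_mod_cast this
  have hsum := (poschlTeller_PACS_normalization_series_summable_general hpole
    (x / lam ^ 2)).mul_right ((lam : ℂ) ^ (2 * m))
  rw [← Complex.summable_ofReal]
  simpa [pacsCoeff, ← Complex.Gamma_ofReal] using hsum
end

section
/- Let κ > 0 and ν ≥ 1 be real numbers and m a natural number. The normalization series of the photon-added Pöschl–Teller coherent states (second choice of Z_j), namely ∑_{n=0}^{∞} [ κ^{2m} Γ(n+m+1) Γ(n+2m+ν+1)² / ( Γ(n+1)² Γ(n+m+ν+1) Γ(2m+ν+1) ) ] · x^{n}, converges for every real x with 0 ≤ x < 1 and diverges for every real x ≥ 1; hence these coherent states are defined exactly on the open unit disk |z| < 1. -/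
/-!
Writing Euler's limit formula for `Γ` as `Γ (n + a) ~ n! * n ^ (a - 1)` gives
`Γ (n + a) / Γ (n + b) ~ n ^ (a - b)`, so the `n`-th coefficient of the normalization series grows
like `n ^ (4 * m + ν)`. Such a series converges inside the unit disk by comparison with
`∑ n ^ k * r ^ n`, and on or outside the unit circle it dominates `∑ n ^ (4 * m + ν)`, which
diverges because `4 * m + ν ≥ -1`.
-/

open Asymptotics Filter

lemma Gamma_natCast_add {a : ℝ} (ha : ∀ k : ℕ, a ≠ -k) (n : ℕ) :
    Real.Gamma (n + a) = Real.Gamma a * ∏ j ∈ Finset.range n, (a + j) := by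
  induction n with
  | zero => simp
  | succ n ih =>
    have hne : (n : ℝ) + a ≠ 0 := fun h => ha n (by linarith)
    rw [Finset.prod_range_succ, ← mul_assoc, ← ih, Nat.cast_succ, add_right_comm,
      Real.Gamma_add_one hne]
    ring

lemma GammaSeq_mul_Gamma_natCast_add {a : ℝ} (ha : ∀ k : ℕ, a ≠ -k) (n : ℕ) :
    Real.GammaSeq a n * ((n + a) * Real.Gamma (n + a)) =
      Real.Gamma a * ((n : ℝ) ^ a * n.factorial) := by
  have hprod : ∏ j ∈ Finset.range (n + 1), (a + j) ≠ 0 :=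
    Finset.prod_ne_zero_iff.mpr fun j _ h => ha j (by linarith)
  have hstep : ((n : ℝ) + a) * Real.Gamma (n + a) =
      Real.Gamma a * ∏ j ∈ Finset.range (n + 1), (a + j) := by
    rw [Gamma_natCast_add ha, Finset.prod_range_succ]
    ring
  rw [hstep, Real.GammaSeq]
  field_simp

lemma natCast_add_const_isEquivalent (a : ℝ) :
    (fun n : ℕ => (n : ℝ) + a) ~[atTop] fun n => (n : ℝ) :=
  IsEquivalent.refl.add_const_of_norm_tendsto_atTop
    (tendsto_norm_atTop_atTop.comp tendsto_natCast_atTop_atTop)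

lemma Gamma_natCast_add_isEquivalent {a : ℝ} (ha : ∀ k : ℕ, a ≠ -k) :
    (fun n : ℕ => Real.Gamma (n + a)) ~[atTop]
      fun n => (n.factorial : ℝ) * (n : ℝ) ^ (a - 1) := by
  have hΓ : Real.Gamma a ≠ 0 := Real.Gamma_ne_zero ha
  have hseq : Real.GammaSeq a ~[atTop] fun _ => Real.Gamma a :=
    (isEquivalent_const_iff_tendsto hΓ).mpr (Real.GammaSeq_tendsto_Gamma a)
  have hquot : (fun n : ℕ => Real.Gamma a * ((n : ℝ) ^ a * n.factorial) /
        (Real.GammaSeq a n * (n + a))) ~[atTop]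
      fun n : ℕ => Real.Gamma a * ((n : ℝ) ^ a * n.factorial) / (Real.Gamma a * n) :=
    IsEquivalent.refl.div (hseq.mul (natCast_add_const_isEquivalent a))
  refine (hquot.congr_left ?_).congr_right ?_
  · filter_upwards [(Real.GammaSeq_tendsto_Gamma a).eventually_ne hΓ] with n hn
    have hne : (n : ℝ) + a ≠ 0 := fun h => ha n (by linarith)
    rw [← GammaSeq_mul_Gamma_natCast_add ha]
    field_simp
  · filter_upwards [eventually_gt_atTop 0] with n hn
    rw [Real.rpow_sub_one (by positivity)]
    field_simp

lemma Gamma_div_Gamma_isEquivalent {a b : ℝ} (ha : ∀ k : ℕ, a ≠ -k) (hb : ∀ k : ℕ, b ≠ -k) :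
    (fun n : ℕ => Real.Gamma (n + a) / Real.Gamma (n + b)) ~[atTop]
      fun n => (n : ℝ) ^ (a - b) := by
  refine ((Gamma_natCast_add_isEquivalent ha).div
    (Gamma_natCast_add_isEquivalent hb)).congr_right ?_
  filter_upwards [eventually_gt_atTop 0] with n hn
  have hn' : (0 : ℝ) < n := by positivity
  rw [Pi.div_apply, mul_div_mul_left _ _ (by positivity), ← Real.rpow_sub hn',
    sub_sub_sub_cancel_right]

lemma summable_rpow_mul_pow_iff {p r : ℝ} (hp : -1 ≤ p) (hr : 0 ≤ r) :
    Summable (fun n : ℕ => (n : ℝ) ^ p * r ^ n) ↔ r < 1 := by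
  constructor
  · intro hsum
    by_contra! h1r
    have hrpow : Summable fun n : ℕ => (n : ℝ) ^ p :=
      hsum.of_nonneg_of_le (fun n => by positivity) fun n =>
        le_mul_of_one_le_right (by positivity) (one_le_pow₀ h1r)
    exact hp.not_gt (Real.summable_nat_rpow.mp hrpow)
  · intro hr1
    have hgeom : Summable fun n : ℕ => (n : ℝ) ^ ⌈p⌉₊ * r ^ n :=
      summable_pow_mul_geometric_of_norm_lt_one _ (by rwa [Real.norm_of_nonneg hr])
    refine summable_of_isBigO_nat hgeom (IsBigO.mul (IsBigO.of_bound' ?_) (isBigO_refl _ _))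
    filter_upwards [eventually_ge_atTop 1] with n hn
    have h1n : (1 : ℝ) ≤ n := by exact_mod_cast hn
    rw [Real.norm_of_nonneg (by positivity), Real.norm_of_nonneg (by positivity),
      ← Real.rpow_natCast]
    exact Real.rpow_le_rpow_of_exponent_le h1n (Nat.le_ceil p)

lemma summable_smul_pow_iff_of_isTheta_rpow
    {A : Type*} [NormedDivisionRing A] [NormedAlgebra ℝ A] [FiniteDimensional ℝ A]
    {c : ℕ → ℝ} {p : ℝ} (hc : c =Θ[atTop] fun n => (n : ℝ) ^ p) (hp : -1 ≤ p) (z : A) :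
    Summable (fun n => c n • z ^ n) ↔ ‖z‖ < 1 := by
  have hpow : (fun n : ℕ => z ^ n) =Θ[atTop] fun n => ‖z‖ ^ n := by
    simpa only [norm_pow] using (isTheta_refl (fun n : ℕ => z ^ n) atTop).norm_right
  exact (hc.smul hpow).summable_iff_nat.trans (summable_rpow_mul_pow_iff hp (norm_nonneg z))

/-- The reciprocal squared expansion coefficient `1 / |K_n^m|²` of the photon-added Pöschl–Teller
coherent states for the second choice of `Z_j`: the `n`-th coefficient of their normalization
series `N_m(x)⁻² = ∑ xⁿ / |K_n^m|²`. -/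
noncomputable def poschlTellerCoeff (κ ν : ℝ) (m n : ℕ) : ℝ :=
  κ ^ (2 * m) * Real.Gamma (n + m + 1) * Real.Gamma (n + 2 * m + ν + 1) ^ 2 /
    (Real.Gamma (n + 1) ^ 2 * Real.Gamma (n + m + ν + 1) * Real.Gamma (2 * m + ν + 1))

lemma poschlTellerCoeff_isTheta {κ ν : ℝ} {m : ℕ} (hκ : κ ≠ 0)
    (hν : ∀ k : ℕ, (m : ℝ) + ν + 1 ≠ -k) :
    poschlTellerCoeff κ ν m =Θ[atTop] fun n => (n : ℝ) ^ (4 * m + ν) := by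
  have hν₂ : ∀ k : ℕ, 2 * (m : ℝ) + ν + 1 ≠ -k := fun k h =>
    hν (k + m) (by push_cast; linarith)
  have hone : ∀ k : ℕ, (1 : ℝ) ≠ -k := fun k h => by linarith [k.cast_nonneg (α := ℝ)]
  have hm : ∀ k : ℕ, (m : ℝ) + 1 ≠ -k := fun k h => by
    linarith [k.cast_nonneg (α := ℝ), m.cast_nonneg (α := ℝ)]
  have hconst : κ ^ (2 * m) / Real.Gamma (2 * m + ν + 1) ≠ 0 :=
    div_ne_zero (pow_ne_zero _ hκ) (Real.Gamma_ne_zero hν₂)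
  have hratios := ((Gamma_div_Gamma_isEquivalent hm hone).mul
    (Gamma_div_Gamma_isEquivalent hν₂ hone)).mul (Gamma_div_Gamma_isEquivalent hν₂ hν)
  refine EventuallyEq.trans_isTheta (.of_eq ?_)
    ((hratios.isTheta.const_mul_left hconst).trans_eventuallyEq ?_)
  · funext n
    simp only [poschlTellerCoeff, Pi.mul_apply, ← add_assoc]
    ring
  · filter_upwards [eventually_gt_atTop 0] with n hn
    have hn' : (0 : ℝ) < n := by positivity
    simp only [Pi.mul_apply]
    rw [← Real.rpow_add hn', ← Real.rpow_add hn']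
    ring_nf

theorem poschlTeller_PACS_second_choice_normalization_radius_general
    {A : Type*} [NormedDivisionRing A] [NormedAlgebra ℝ A] [FiniteDimensional ℝ A]
    {κ ν : ℝ} {m : ℕ} (hκ : κ ≠ 0) (hν : ∀ k : ℕ, (m : ℝ) + ν + 1 ≠ -k)
    (hexp : -1 ≤ 4 * (m : ℝ) + ν) (z : A) :
    Summable (fun n => poschlTellerCoeff κ ν m n • z ^ n) ↔ ‖z‖ < 1 :=
  summable_smul_pow_iff_of_isTheta_rpow (poschlTellerCoeff_isTheta hκ hν) hexp z

/-- The normalization series of the photon-added Pöschl–Teller coherent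
states (second choice of `Z_j`) converges exactly for `0 ≤ x < 1`, so these states are
defined exactly on the open unit disk `|z| < 1`. -/
theorem poschlTeller_PACS_second_choice_normalization_radius
    (κ ν : ℝ) (hκ : 0 < κ) (hν : 1 ≤ ν) (m : ℕ) :
    (∀ x : ℝ, 0 ≤ x → x < 1 →
      Summable (fun n : ℕ =>
        (κ ^ (2 * m) * Real.Gamma ((n : ℝ) + (m : ℝ) + 1)
            * Real.Gamma ((n : ℝ) + 2 * (m : ℝ) + ν + 1) ^ 2
          / (Real.Gamma ((n : ℝ) + 1) ^ 2
              * Real.Gamma ((n : ℝ) + (m : ℝ) + ν + 1)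
              * Real.Gamma (2 * (m : ℝ) + ν + 1)))
          * x ^ n)) ∧
    (∀ x : ℝ, 1 ≤ x →
      ¬ Summable (fun n : ℕ =>
        (κ ^ (2 * m) * Real.Gamma ((n : ℝ) + (m : ℝ) + 1)
            * Real.Gamma ((n : ℝ) + 2 * (m : ℝ) + ν + 1) ^ 2
          / (Real.Gamma ((n : ℝ) + 1) ^ 2
              * Real.Gamma ((n : ℝ) + (m : ℝ) + ν + 1)
              * Real.Gamma (2 * (m : ℝ) + ν + 1)))
          * x ^ n)) := by
  have hnonpole (k : ℕ) : (m : ℝ) + ν + 1 ≠ -k := by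
    linarith [m.cast_nonneg (α := ℝ), k.cast_nonneg (α := ℝ)]
  have hexp : -1 ≤ 4 * (m : ℝ) + ν := by linarith [m.cast_nonneg (α := ℝ)]
  have hradius (x : ℝ) := poschlTeller_PACS_second_choice_normalization_radius_general
    hκ.ne' hnonpole hexp x
  exact ⟨fun x hx0 hx1 => (hradius x).2 (by rwa [Real.norm_of_nonneg hx0]),
    fun x hx h => ((hradius x).1 h).not_ge (hx.trans (le_abs_self x))⟩
end
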